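/- Suppose t ∈ (0, max f), L_t is nonempty and compact, and ∇f ≠ 0 on L_t. For sufficiently small η > 0 there exist β ∈ (0, η) and c₀ > 0 such that on the open set G := {x : t + η − β < f(x) < t + η + β} one has ‖∇f‖ > c₀, and the descent time τ(x) := inf{s > 0 : f(x − s N(x)) = t}, with N(x) := ∇f(x)/‖∇f(x)‖, is continuously differentiable on G. -/

import Mathlib

open Metric Set Filter Topology MeasureTheory

/-- The descent time `τ(x) = inf{s > 0 : f(x − s N(x)) = t}` along the unit normal
direction `N(x) = ∇f(x)/‖∇f(x)‖`. -/
noncomputable def descTime {d : ℕ} (f : EuclideanSpace ℝ (Fin d) → ℝ) (t : ℝ)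
    (x : EuclideanSpace ℝ (Fin d)) : ℝ :=
  sInf {s : ℝ | 0 < s ∧ f (x - s • (‖gradient f x‖⁻¹ • gradient f x)) = t}

/-! Outside a ball containing `L_t`, the set `{t < f}` is invariant under dilations; being open of
finite volume, it is empty there, so `{t ≤ f}` is compact. By compactness there are `c, r, δ > 0`
such that on the band `{t < f < t + δ}` the function `f` decreases at rate greater than `c` along
`s ↦ x - s N(x)` for `0 ≤ s ≤ r`. Once `δ ≤ c r`, each of these segments meets `L_t` exactly once,
transversally, and the implicit function theorem gives the regularity of the crossing time.
-/

section Superlevel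

open scoped Pointwise

variable {E : Type*} [NormedAddCommGroup E] [NormedSpace ℝ E]

lemma lt_apply_smul_of_lt_norm {f : E → ℝ} (hf : Continuous f) {t R : ℝ}
    (hR : ∀ x, f x = t → ‖x‖ ≤ R) {x : E} (hx : t < f x) (hRx : R < ‖x‖) {a : ℝ} (ha : 1 ≤ a) :
    t < f (a • x) := by
  by_contra! hle
  have hcont : ContinuousOn (fun s : ℝ ↦ f (s • x)) (Icc 1 a) := by fun_prop
  obtain ⟨s, hs, hst⟩ : t ∈ (fun s : ℝ ↦ f (s • x)) '' Icc 1 a :=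
    intermediate_value_Icc' ha hcont ⟨hle, by simpa using hx.le⟩
  have hnorm : ‖x‖ ≤ ‖s • x‖ := by
    rw [norm_smul, Real.norm_of_nonneg (zero_le_one.trans hs.1)]
    exact le_mul_of_one_le_left (norm_nonneg x) hs.1
  exact (hRx.trans_le hnorm).not_ge (hR _ hst)

variable [FiniteDimensional ℝ E] [MeasurableSpace E] [BorelSpace E]
  (μ : Measure E) [μ.IsAddHaarMeasure]

lemma measure_eq_zero_of_smul_subset [Nontrivial E] {U : Set E} (hU : μ U ≠ ⊤) {a : ℝ}
    (ha : 1 < |a|) (hsub : a • U ⊆ U) : μ U = 0 := by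
  by_contra h0
  have hscale : 1 < ENNReal.ofReal |a ^ Module.finrank ℝ E| := by
    rw [ENNReal.one_lt_ofReal, abs_pow]
    exact one_lt_pow₀ ha Module.finrank_pos.ne'
  refine (measure_mono (μ := μ) hsub).not_gt ?_
  calc μ U = 1 * μ U := (one_mul _).symm
    _ < ENNReal.ofReal |a ^ Module.finrank ℝ E| * μ U :=
      (ENNReal.mul_lt_mul_iff_left h0 hU).2 hscale
    _ = μ (a • U) := (Measure.addHaar_smul μ a U).symm

lemma isBounded_superlevel {f : E → ℝ} (hf : Continuous f) {t : ℝ}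
    (hfin : μ {x | t < f x} ≠ ⊤) (hlevel : Bornology.IsBounded {x | f x = t}) :
    Bornology.IsBounded {x | t ≤ f x} := by
  cases subsingleton_or_nontrivial E
  · exact (Set.toFinite _).isBounded
  obtain ⟨R, -, hR⟩ := hlevel.exists_pos_norm_le
  set U : Set E := {x | t < f x ∧ R < ‖x‖}
  have hU_open : IsOpen U :=
    (isOpen_lt continuous_const hf).inter (isOpen_lt continuous_const continuous_norm)
  have hU_fin : μ U ≠ ⊤ := measure_ne_top_of_subset (fun _ hx ↦ hx.1) hfin
  have hU_smul : (2 : ℝ) • U ⊆ U := by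
    rintro _ ⟨x, ⟨hx, hRx⟩, rfl⟩
    refine ⟨lt_apply_smul_of_lt_norm hf hR hx hRx one_le_two, hRx.trans_le ?_⟩
    simpa [norm_smul] using le_mul_of_one_le_left (norm_nonneg x) one_le_two
  have hU_empty : U = ∅ := hU_open.eq_empty_of_measure_zero (μ := μ)
    (measure_eq_zero_of_smul_subset μ hU_fin (by norm_num) hU_smul)
  refine isBounded_iff_forall_norm_le.2 ⟨R, fun x hx ↦ ?_⟩
  by_contra! hRx
  have hx_lt : t < f x := lt_of_le_of_ne hx fun h ↦ (hR x h.symm).not_gt hRx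
  exact hU_empty.subset ⟨hx_lt, hRx⟩

end Superlevel

section Compactness

lemma exists_pos_le_near_level {X : Type*} [TopologicalSpace X] {f g : X → ℝ} {t : ℝ}
    (hf : Continuous f) (hg : Continuous g) (hK : IsCompact {x | t ≤ f x})
    (hpos : ∀ x, f x = t → 0 < g x) :
    ∃ m > 0, ∀ x, t ≤ f x → f x < t + m → m ≤ g x := by
  have hmax : ∀ x ∈ {x | t ≤ f x}, 0 < max (f x - t) (g x) := by
    intro x (hx : t ≤ f x)
    rcases hx.eq_or_lt with heq | hlt
    · exact lt_max_of_lt_right (hpos x heq.symm)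
    · exact lt_max_of_lt_left (sub_pos.2 hlt)
  obtain ⟨m, hm, hle⟩ := hK.exists_forall_le' (by fun_prop) hmax
  exact ⟨m, hm, fun x hx hxm ↦ (le_max_iff.1 (hle x hx)).resolve_left (by linarith)⟩

lemma exists_dist_lt_near_isCompact {X Y : Type*} [PseudoMetricSpace X] [PseudoMetricSpace Y]
    {g : X → Y} (hg : Continuous g) {K : Set X} (hK : IsCompact K) {ε : ℝ} (hε : 0 < ε) :
    ∃ r > 0, ∀ x ∈ K, ∀ y, dist x y ≤ r → dist (g x) (g y) < ε := by
  obtain ⟨δ, hδ, hdist⟩ := Metric.mem_uniformity_dist.1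
    (hK.uniformContinuousAt_of_continuousAt g (fun _ _ ↦ hg.continuousAt)
      (Metric.dist_mem_uniformity hε))
  exact ⟨δ / 2, half_pos hδ, fun x hx y hxy ↦ hdist (hxy.trans_lt (half_lt_self hδ)) hx⟩

end Compactness

section ImplicitFunction

lemma exists_contDiffAt_implicit_of_hasDerivAt {𝕜 E : Type*} [RCLike 𝕜] [NormedAddCommGroup E]
    [NormedSpace 𝕜 E] [CompleteSpace E] {n : WithTop ℕ∞} (hn : n ≠ 0) {F : E × 𝕜 → 𝕜} {x₀ : E}
    {s₀ a : 𝕜} (hF : ContDiffAt 𝕜 n F (x₀, s₀)) (ha : a ≠ 0)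
    (hderiv : HasDerivAt (fun s ↦ F (x₀, s)) a s₀) :
    ∃ φ : E → 𝕜, ContDiffAt 𝕜 n φ x₀ ∧ φ x₀ = s₀ ∧ ∀ᶠ x in 𝓝 x₀, F (x, φ x) = F (x₀, s₀) := by
  have hpartial : HasDerivAt (fun s ↦ F (x₀, s)) (fderiv 𝕜 F (x₀, s₀) (0, 1)) s₀ :=
    (hF.differentiableAt hn).hasFDerivAt.comp_hasDerivAt s₀
      ((hasDerivAt_const s₀ x₀).prodMk (hasDerivAt_id s₀))
  have hinv : (fderiv 𝕜 F (x₀, s₀) ∘L .inr 𝕜 E 𝕜).IsInvertible := by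
    refine ⟨ContinuousLinearEquiv.unitsEquivAut 𝕜 (Units.mk0 a ha), ?_⟩
    ext
    simp [hderiv.unique hpartial]
  exact ⟨hF.implicitFunction hn hinv, hF.contDiffAt_implicitFunction hn hinv,
    hF.implicitFunction_apply_self hn hinv, hF.eventually_apply_implicitFunction hn hinv⟩

end ImplicitFunction

section Descent

open scoped Gradient RealInnerProductSpace

variable {E : Type*} [NormedAddCommGroup E] [InnerProductSpace ℝ E]

lemma real_inner_normalize_self (u : E) : ⟪u, NormedSpace.normalize u⟫ = ‖u‖ := by
  rw [NormedSpace.normalize, real_inner_smul_right, real_inner_self_eq_norm_mul_norm, ← mul_assoc,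
    inv_mul_mul_self]

lemma norm_sub_norm_sub_le_real_inner_normalize (u v : E) :
    ‖u‖ - ‖u - v‖ ≤ ⟪v, NormedSpace.normalize u⟫ := by
  have hnorm : ‖NormedSpace.normalize u‖ ≤ 1 := by
    rw [NormedSpace.normalize, norm_smul, norm_inv, norm_norm]
    exact inv_mul_le_one
  have hcs : ⟪u - v, NormedSpace.normalize u⟫ ≤ ‖u - v‖ :=
    (real_inner_le_norm _ _).trans (mul_le_of_le_one_right (norm_nonneg _) hnorm)
  rw [inner_sub_left, real_inner_normalize_self] at hcs
  linarith

variable [CompleteSpace E]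

/-- The unit normal `N(x) = ∇f(x) / ‖∇f(x)‖` to the level sets of `f`, with the value `0` at
critical points. -/
noncomputable def unitNormal (f : E → ℝ) (x : E) : E := NormedSpace.normalize (∇ f x)

/-- The descent time `descTime` on an arbitrary Hilbert space: the first time at which the ray
leaving `x` in the direction `-N(x)` meets `{f = t}`, and `0` if it never does. On Euclidean space
the two agree definitionally. -/
noncomputable def descentTime (f : E → ℝ) (t : ℝ) (x : E) : ℝ :=
  sInf {s : ℝ | 0 < s ∧ f (x - s • unitNormal f x) = t}

variable {f : E → ℝ} {t r : ℝ} {n : WithTop ℕ∞}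

lemma contDiff_gradient (hf : ContDiff ℝ (n + 1) f) : ContDiff ℝ n (∇ f) :=
  (InnerProductSpace.toDual ℝ E).symm.contDiff.comp (hf.fderiv_right le_rfl)

lemma contDiffAt_unitNormal (hf : ContDiff ℝ (n + 1) f) {x : E} (hx : ∇ f x ≠ 0) :
    ContDiffAt ℝ n (unitNormal f) x := by
  have hgrad := (contDiff_gradient hf).contDiffAt (x := x)
  exact ((hgrad.norm ℝ hx).inv (norm_ne_zero_iff.2 hx)).smul hgrad

lemma hasDerivAt_sub_smul {x v : E} {s : ℝ} (hf : DifferentiableAt ℝ f (x - s • v)) :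
    HasDerivAt (fun s : ℝ ↦ f (x - s • v)) (-⟪∇ f (x - s • v), v⟫) s := by
  have hray : HasDerivAt (fun s : ℝ ↦ x - s • v) (-v) s := by
    simpa using ((hasDerivAt_id s).smul_const v).const_sub x
  simpa [Function.comp_def, inner_gradient_left] using hf.hasFDerivAt.comp_hasDerivAt s hray

lemma strictAntiOn_sub_smul (hf : Differentiable ℝ f) {x v : E}
    (hv : ∀ s ∈ Ioo 0 r, 0 < ⟪∇ f (x - s • v), v⟫) :
    StrictAntiOn (fun s : ℝ ↦ f (x - s • v)) (Icc 0 r) := by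
  have hcont := hf.continuous
  refine strictAntiOn_of_deriv_neg (convex_Icc 0 r) (by fun_prop) fun s hs ↦ ?_
  rw [(hasDerivAt_sub_smul (hf _)).deriv, neg_lt_zero]
  exact hv s (interior_Icc.subset hs)

lemma apply_sub_smul_le (hf : Differentiable ℝ f) {x v : E} {c : ℝ} (hr : 0 ≤ r)
    (hv : ∀ s ∈ Ioo 0 r, c ≤ ⟪∇ f (x - s • v), v⟫) : f (x - r • v) ≤ f x - c * r := by
  have hcont := hf.continuous
  have hdrop := (convex_Icc 0 r).image_sub_le_mul_sub_of_deriv_le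
    (f := fun s : ℝ ↦ f (x - s • v)) (C := -c) (by fun_prop) (by fun_prop)
    (fun s hs ↦ by
      rw [(hasDerivAt_sub_smul (hf _)).deriv, neg_le_neg_iff]
      exact hv s (interior_Icc.subset hs))
    0 (left_mem_Icc.2 hr) r (right_mem_Icc.2 hr) hr
  simp only [zero_smul, sub_zero] at hdrop
  linarith

lemma descentTime_eq_of_strictAntiOn {x : E} {s : ℝ}
    (hanti : StrictAntiOn (fun s : ℝ ↦ f (x - s • unitNormal f x)) (Icc 0 r))
    (hs : s ∈ Ioc 0 r) (hst : f (x - s • unitNormal f x) = t) : descentTime f t x = s := by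
  refine IsLeast.csInf_eq ⟨⟨hs.1, hst⟩, fun s' hs' ↦ ?_⟩
  by_contra! hlt
  exact (hanti ⟨hs'.1.le, hlt.le.trans hs.2⟩ (Ioc_subset_Icc_self hs) hlt).ne (hst.trans hs'.2.symm)

lemma contDiffAt_descentTime (hn : n ≠ 0) (hf : ContDiff ℝ (n + 1) f) {x₀ : E} (hr : 0 < r)
    (hdesc : ∀ᶠ x in 𝓝 x₀, ∀ s ∈ Icc 0 r, 0 < ⟪∇ f (x - s • unitNormal f x), unitNormal f x⟫)
    (hstart : t < f x₀) (hend : f (x₀ - r • unitNormal f x₀) < t) :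
    ContDiffAt ℝ n (descentTime f t) x₀ := by
  have hdiff : Differentiable ℝ f := hf.differentiable (by simp)
  have hdesc₀ := hdesc.self_of_nhds
  have hgrad : ∇ f x₀ ≠ 0 := fun h ↦ by simpa [h] using hdesc₀ 0 ⟨le_rfl, hr.le⟩
  let F : E × ℝ → ℝ := fun p ↦ f (p.1 - p.2 • unitNormal f p.1)
  obtain ⟨s₀, hs₀, hs₀t⟩ : ∃ s₀ ∈ Ioo 0 r, F (x₀, s₀) = t := by
    have hcont : ContinuousOn (fun s ↦ F (x₀, s)) (Icc 0 r) := by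
      have := hdiff.continuous
      simp only [F]
      fun_prop
    exact intermediate_value_Ioo' hr.le hcont ⟨hend, by simpa [F] using hstart⟩
  have hF : ContDiffAt ℝ n F (x₀, s₀) := by
    have hN : ContDiffAt ℝ n (fun p : E × ℝ ↦ unitNormal f p.1) (x₀, s₀) :=
      (contDiffAt_unitNormal hf hgrad).fst'
    exact (hf.of_le le_self_add).contDiffAt.comp (x₀, s₀)
      (contDiffAt_fst.sub (contDiffAt_snd.smul hN))
  obtain ⟨φ, hφ, hφ₀, hφF⟩ := exists_contDiffAt_implicit_of_hasDerivAt hn hF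
    (neg_ne_zero.2 (hdesc₀ s₀ (Ioo_subset_Icc_self hs₀)).ne')
    (hasDerivAt_sub_smul (v := unitNormal f x₀) (hdiff _))
  have hφr : ∀ᶠ x in 𝓝 x₀, φ x ∈ Ioo 0 r :=
    hφ.continuousAt.eventually_mem (hφ₀ ▸ Ioo_mem_nhds hs₀.1 hs₀.2)
  refine hφ.congr_of_eventuallyEq ?_
  filter_upwards [hφr, hdesc, hφF] with x hx hxdesc hxF
  exact descentTime_eq_of_strictAntiOn
    (strictAntiOn_sub_smul hdiff fun s hs ↦ hxdesc s (Ioo_subset_Icc_self hs))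
    (Ioo_subset_Ioc_self hx) (hxF.trans hs₀t)

lemma exists_lt_inner_gradient_unitNormal (hgrad : Continuous (∇ f)) (hf : Continuous f)
    (hK : IsCompact {x | t ≤ f x}) (hreg : ∀ x, f x = t → ∇ f x ≠ 0) :
    ∃ c > (0 : ℝ), ∃ r > (0 : ℝ), ∃ δ > (0 : ℝ), ∀ x, t ≤ f x → f x < t + δ → ∀ s ∈ Icc 0 r,
      c < ⟪∇ f (x - s • unitNormal f x), unitNormal f x⟫ := by
  obtain ⟨m, hm, hmle⟩ := exists_pos_le_near_level hf hgrad.norm hK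
    fun x hx ↦ norm_pos_iff.2 (hreg x hx)
  obtain ⟨r, hr, hclose⟩ := exists_dist_lt_near_isCompact hgrad hK (half_pos hm)
  refine ⟨m / 2, half_pos hm, r, hr, m, hm, fun x hx hxm s hs ↦ ?_⟩
  have hgx : m ≤ ‖∇ f x‖ := hmle x hx hxm
  have hN : ‖unitNormal f x‖ = 1 :=
    NormedSpace.norm_normalize_eq_one_iff.2 (norm_pos_iff.1 (hm.trans_le hgx))
  have hdist : dist x (x - s • unitNormal f x) ≤ r := by
    rw [dist_eq_norm, sub_sub_cancel, norm_smul, hN, mul_one, Real.norm_of_nonneg hs.1]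
    exact hs.2
  have hvar : ‖∇ f x - ∇ f (x - s • unitNormal f x)‖ < m / 2 :=
    dist_eq_norm (∇ f x) _ ▸ hclose x hx _ hdist
  calc m / 2 < ‖∇ f x‖ - ‖∇ f x - ∇ f (x - s • unitNormal f x)‖ := by linarith
    _ ≤ _ := norm_sub_norm_sub_le_real_inner_normalize _ _

lemma exists_contDiffOn_descentTime (hn : n ≠ 0) (hf : ContDiff ℝ (n + 1) f)
    (hK : IsCompact {x | t ≤ f x}) (hreg : ∀ x, f x = t → ∇ f x ≠ 0) :
    ∃ δ > 0, ∃ c > 0, (∀ x, t ≤ f x → f x < t + δ → c < ‖∇ f x‖) ∧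
      ContDiffOn ℝ n (descentTime f t) {x | t < f x ∧ f x < t + δ} := by
  have hcont : Continuous f := hf.continuous
  obtain ⟨c, hc, r, hr, δ, hδ, hinner⟩ := exists_lt_inner_gradient_unitNormal
    (contDiff_gradient hf).continuous hcont hK hreg
  refine ⟨min δ (c * r), by positivity, c, hc, fun x hx hxδ ↦ ?_, fun x₀ hx₀ ↦ ?_⟩
  · have hlt := hinner x hx (hxδ.trans_le (by gcongr; exact min_le_left _ _)) 0 ⟨le_rfl, hr.le⟩
    rwa [zero_smul, sub_zero, unitNormal, real_inner_normalize_self] at hlt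
  · have hδ₀ : f x₀ < t + δ := hx₀.2.trans_le (by gcongr; exact min_le_left _ _)
    have hcr : f x₀ < t + c * r := hx₀.2.trans_le (by gcongr; exact min_le_right _ _)
    have hend : f (x₀ - r • unitNormal f x₀) < t := by
      have := apply_sub_smul_le (hf.differentiable (by simp)) hr.le fun s hs ↦
        (hinner x₀ hx₀.1.le hδ₀ s (Ioo_subset_Icc_self hs)).le
      linarith
    refine (contDiffAt_descentTime hn hf hr ?_ hx₀.1 hend).contDiffWithinAt
    filter_upwards [hcont.continuousAt.eventually_mem (Ioo_mem_nhds hx₀.1 hδ₀)] with x hx s hs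
    exact hc.trans (hinner x hx.1.le hx.2 s hs)

end Descent

theorem descent_time_continuously_differentiable_general {E : Type*} [NormedAddCommGroup E]
    [InnerProductSpace ℝ E] [FiniteDimensional ℝ E] [MeasurableSpace E] [BorelSpace E]
    (μ : Measure E) [μ.IsAddHaarMeasure] {n : WithTop ℕ∞} (hn : n ≠ 0) {f : E → ℝ}
    (hf : ContDiff ℝ (n + 1) f) {t : ℝ} (hfin : μ {x | t < f x} ≠ ⊤)
    (hcomp : IsCompact {x | f x = t}) (hreg : ∀ x, f x = t → gradient f x ≠ 0) :
    ∃ η₀ > 0, ∀ η : ℝ, 0 < η → η < η₀ →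
      ∃ β c₀ : ℝ, 0 < β ∧ β < η ∧ 0 < c₀ ∧
        (∀ x, t + η - β < f x → f x < t + η + β → c₀ < ‖gradient f x‖) ∧
        ContDiffOn ℝ n (descentTime f t) {x | t + η - β < f x ∧ f x < t + η + β} := by
  have hK : IsCompact {x | t ≤ f x} :=
    isCompact_of_isClosed_isBounded (isClosed_le continuous_const hf.continuous)
      (isBounded_superlevel μ hf.continuous hfin hcomp.isBounded)
  obtain ⟨δ, hδ, c, hc, hgrad, hsmooth⟩ := exists_contDiffOn_descentTime hn hf hK hreg
  refine ⟨δ / 2, half_pos hδ, fun η hη hηδ ↦ ⟨η / 2, c, half_pos hη, half_lt_self hη, hc, ?_, ?_⟩⟩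
  · exact fun x hlo hhi ↦ hgrad x (by linarith) (by linarith)
  · exact hsmooth.mono fun x hx ↦ ⟨by linarith [hx.1], by linarith [hx.2]⟩

/-- If `L_t` is nonempty, compact, and free of critical points, then for all
sufficiently small `η > 0` there are `β ∈ (0, η)` and `c₀ > 0` such that, on the open band
`G = {x : t + η − β < f x < t + η + β}`, one has `‖∇f‖ > c₀` and the descent time
`τ(x) = inf{s > 0 : f(x − s N(x)) = t}` is continuously differentiable on `G`. -/
theorem descent_time_continuously_differentiable {d : ℕ}
    (f : EuclideanSpace ℝ (Fin d) → ℝ)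
    (hf : ContDiff ℝ 2 f) (hf_nonneg : ∀ x, 0 ≤ f x) (hf_int : ∫ x, f x = 1)
    (t : ℝ) (ht : 0 < t) (ht_max : ∃ z, t < f z)
    (hne : {x : EuclideanSpace ℝ (Fin d) | f x = t}.Nonempty)
    (hcomp : IsCompact {x : EuclideanSpace ℝ (Fin d) | f x = t})
    (hreg : ∀ x, f x = t → gradient f x ≠ 0) :
    ∃ η₀ > 0, ∀ η : ℝ, 0 < η → η < η₀ →
      ∃ β c₀ : ℝ, 0 < β ∧ β < η ∧ 0 < c₀ ∧
        (∀ x : EuclideanSpace ℝ (Fin d),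
          t + η - β < f x → f x < t + η + β → c₀ < ‖gradient f x‖) ∧
        ContDiffOn ℝ 1 (descTime f t)
          {x : EuclideanSpace ℝ (Fin d) | t + η - β < f x ∧ f x < t + η + β} := by
  have hint : Integrable f := .of_integral_ne_zero (by simp [hf_int])
  exact descent_time_continuously_differentiable_general volume one_ne_zero
    (by rwa [one_add_one_eq_two]) (hint.measure_gt_lt_top ht).ne hcomp hreg
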